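/- Let P_1, P_2, P_3 be orthogonal projections on a complex Hilbert space H with P_2P_3 = 0, and P̃_1, P̃_2, P̃_3 orthogonal projections on a complex Hilbert space H̃ with P̃_2P̃_3 = 0. Then the systems S_{P_1,P_2⊥P_3} and S_{P̃_1,P̃_2⊥P̃_3} are isomorphic (there is a bounded invertible R : H → H̃ mapping each of the five subspaces of the first system onto the corresponding subspace of the second) if and only if the triple (P_1,P_2,P_3) is unitarily equivalent to (P̃_1,P̃_2,P̃_3), i.e., there exists a unitary W : H → H̃ with WP_i = P̃_iW for i = 1, 2, 3. -/

import Mathlib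

open ContinuousLinearMap in
/-- The unitary part of a bounded invertible operator `R` intertwines every pair of self-adjoint
operators that `R` intertwines. -/
theorem ContinuousLinearEquiv.exists_linearIsometryEquiv_intertwining
    {H H' : Type*}
    [NormedAddCommGroup H] [InnerProductSpace ℂ H] [CompleteSpace H]
    [NormedAddCommGroup H'] [InnerProductSpace ℂ H'] [CompleteSpace H']
    (R : H ≃L[ℂ] H') :
    ∃ W : H ≃ₗᵢ[ℂ] H', ∀ (P : H →L[ℂ] H) (Q : H' →L[ℂ] H'),
      IsSelfAdjoint P → IsSelfAdjoint Q → (∀ x, R (P x) = Q (R x)) →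
        ∀ x, W (P x) = Q (W x) := by
  set T : H →L[ℂ] H' := R.toContinuousLinearMap with hT
  set A : H →L[ℂ] H := adjoint T ∘L T with hA
  have hA_nonneg : 0 ≤ A := (nonneg_iff_isPositive A).mpr (isPositive_adjoint_comp_self T)
  have hA_unit : IsUnit A := by
    set S : H' →L[ℂ] H := R.symm.toContinuousLinearMap with hS
    have hST : S ∘L T = 1 := by ext x; simp [hS, hT]
    have hTS : T ∘L S = 1 := by ext x; simp [hS, hT]
    have hST_adj : adjoint T ∘L adjoint S = 1 := by
      rw [← adjoint_comp, hST, ← star_eq_adjoint, star_one]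
    have hTS_adj : adjoint S ∘L adjoint T = 1 := by
      rw [← adjoint_comp, hTS, ← star_eq_adjoint, star_one]
    refine isUnit_iff_exists.mpr ⟨S ∘L adjoint S, ?_, ?_⟩
    · calc A * (S ∘L adjoint S) = adjoint T ∘L ((T ∘L S) ∘L adjoint S) := rfl
        _ = adjoint T ∘L adjoint S := by rw [hTS]; rfl
        _ = 1 := hST_adj
    · calc (S ∘L adjoint S) * A = S ∘L ((adjoint S ∘L adjoint T) ∘L T) := rfl
        _ = S ∘L T := by rw [hTS_adj]; rfl
        _ = 1 := hST
  have hA_pos : IsStrictlyPositive A := hA_unit.isStrictlyPositive hA_nonneg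
  set B : H →L[ℂ] H := A ^ (-(1 / 2) : ℝ) with hB
  have hB_adj : adjoint B = B :=
    (IsSelfAdjoint.of_nonneg (CFC.rpow_nonneg : 0 ≤ A ^ (-(1 / 2) : ℝ)))
  have hBAB : B * A * B = 1 := CFC.conjugate_rpow_neg_one_half A
  have hB_right (x : H) : B ((A ^ (1 / 2 : ℝ)) x) = x :=
    DFunLike.congr_fun (CFC.rpow_neg_mul_rpow (a := A) (1 / 2)) x
  let V : H →ₗᵢ[ℂ] H' := LinearMap.isometryOfInner (T ∘L B).toLinearMap fun x y => by
    have h := DFunLike.congr_fun hBAB y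
    calc inner ℂ (T (B x)) (T (B y)) = inner ℂ (B x) (A (B y)) := by
          rw [hA, comp_apply, adjoint_inner_right]
      _ = inner ℂ x (B (A (B y))) := by
          rw [← adjoint_inner_right B, hB_adj]
      _ = inner ℂ x y := congrArg (inner ℂ x) h
  have hV : Function.Surjective V := fun y =>
    ⟨(A ^ (1 / 2 : ℝ)) (R.symm y), by
      change T (B _) = y
      rw [hB_right]
      exact R.apply_symm_apply y⟩
  refine ⟨LinearIsometryEquiv.ofSurjective V hV, fun P Q hP hQ hR x => ?_⟩
  have hTP : T ∘L P = Q ∘L T := ContinuousLinearMap.ext hR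
  have hPT : P ∘L adjoint T = adjoint T ∘L Q := by
    simpa only [adjoint_comp, hP.adjoint_eq, hQ.adjoint_eq] using congrArg adjoint hTP
  have hAP : Commute A P := by
    change (adjoint T ∘L T) ∘L P = P ∘L (adjoint T ∘L T)
    rw [comp_assoc, hTP, ← comp_assoc, ← hPT, comp_assoc]
  have hBP : Commute B P := hAP.cfc_nnreal _
  change T (B (P x)) = Q (T (B x))
  rw [show B (P x) = P (B x) from DFunLike.congr_fun hBP.eq x]
  exact hR (B x)

theorem Function.Surjective.image_range_eq_of_intertwining {α β : Type*} {W : α → β}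
    (hW : Function.Surjective W) {P : α → α} {Q : β → β} (h : ∀ x, W (P x) = Q (W x)) :
    W '' Set.range P = Set.range Q := by
  rw [← Set.range_comp, show W ∘ P = Q ∘ W from funext h, hW.range_comp]

/-- A linear map carrying the range of `P` into that of the idempotent `Q`, and the range of
`1 - P` into the kernel of `Q`, intertwines `P` and `Q`. -/
theorem ContinuousLinearEquiv.intertwining_of_image_range
    {H H' : Type*} [NormedAddCommGroup H] [InnerProductSpace ℂ H]
    [NormedAddCommGroup H'] [InnerProductSpace ℂ H']
    (R : H ≃L[ℂ] H') {P : H →L[ℂ] H} {Q : H' →L[ℂ] H'} (hQ : Q ∘L Q = Q)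
    (hR : R '' Set.range P = Set.range Q) (hker : ∀ x, Q (R (x - P x)) = 0) (x : H) :
    R (P x) = Q (R x) := by
  obtain ⟨y, hy⟩ : R (P x) ∈ Set.range Q := hR ▸ Set.mem_image_of_mem R (Set.mem_range_self x)
  have hfix : Q (R (P x)) = R (P x) := by
    rw [← hy]
    exact DFunLike.congr_fun hQ y
  have h := hker x
  rw [R.map_sub, Q.map_sub, sub_eq_zero] at h
  rw [h, hfix]

/-- If `R` maps `range P` onto `range N` and `Q N = 0`, then `Q R P = 0`. -/
theorem ContinuousLinearEquiv.apply_apply_eq_zero_of_image_range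
    {H H' : Type*} [NormedAddCommGroup H] [InnerProductSpace ℂ H]
    [NormedAddCommGroup H'] [InnerProductSpace ℂ H']
    (R : H ≃L[ℂ] H') {P : H →L[ℂ] H} {N Q : H' →L[ℂ] H'}
    (hR : R '' Set.range P = Set.range N) (hQN : Q ∘L N = 0) (x : H) :
    Q (R (P x)) = 0 := by
  obtain ⟨y, hy⟩ : R (P x) ∈ Set.range N := hR ▸ Set.mem_image_of_mem R (Set.mem_range_self x)
  rw [← hy]
  exact DFunLike.congr_fun hQN y

/-- `S_{P₁,P₂⊥P₃} ≅ S_{P̃₁,P̃₂⊥P̃₃}` iff the triple `(P₁,P₂,P₃)` is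
unitarily equivalent to the triple `(P̃₁,P̃₂,P̃₃)`. -/
theorem stmt_5
    {H H' : Type*}
    [NormedAddCommGroup H] [InnerProductSpace ℂ H] [CompleteSpace H]
    [NormedAddCommGroup H'] [InnerProductSpace ℂ H'] [CompleteSpace H']
    (P₁ P₂ P₃ : H →L[ℂ] H)
    (hP₁ : IsSelfAdjoint P₁ ∧ P₁ ∘L P₁ = P₁)
    (hP₂ : IsSelfAdjoint P₂ ∧ P₂ ∘L P₂ = P₂)
    (hP₃ : IsSelfAdjoint P₃ ∧ P₃ ∘L P₃ = P₃)
    (hP₂₃ : P₂ ∘L P₃ = 0)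
    (Q₁ Q₂ Q₃ : H' →L[ℂ] H')
    (hQ₁ : IsSelfAdjoint Q₁ ∧ Q₁ ∘L Q₁ = Q₁)
    (hQ₂ : IsSelfAdjoint Q₂ ∧ Q₂ ∘L Q₂ = Q₂)
    (hQ₃ : IsSelfAdjoint Q₃ ∧ Q₃ ∘L Q₃ = Q₃)
    (hQ₂₃ : Q₂ ∘L Q₃ = 0) :
    (∃ R : H ≃L[ℂ] H',
      (⇑R '' Set.range ⇑P₁ = Set.range ⇑Q₁) ∧
      (⇑R '' Set.range ⇑(1 - P₁) = Set.range ⇑(1 - Q₁)) ∧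
      (⇑R '' Set.range ⇑P₂ = Set.range ⇑Q₂) ∧
      (⇑R '' Set.range ⇑P₃ = Set.range ⇑Q₃) ∧
      (⇑R '' Set.range ⇑(1 - P₂ - P₃) = Set.range ⇑(1 - Q₂ - Q₃))) ↔
    (∃ W : H ≃ₗᵢ[ℂ] H',
      (∀ x : H, W (P₁ x) = Q₁ (W x)) ∧
      (∀ x : H, W (P₂ x) = Q₂ (W x)) ∧
      (∀ x : H, W (P₃ x) = Q₃ (W x))) := by
  constructor
  · rintro ⟨R, h₁, h₁', h₂, h₃, h₂₃⟩
    have hQ₃₂ : Q₃ ∘L Q₂ = 0 := by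
      simpa only [ContinuousLinearMap.adjoint_comp, hQ₂.1.adjoint_eq, hQ₃.1.adjoint_eq, map_zero]
        using congrArg ContinuousLinearMap.adjoint hQ₂₃
    have hQ₁c : Q₁ ∘L (1 - Q₁) = 0 := by
      rw [ContinuousLinearMap.comp_sub, hQ₁.2]; exact sub_self Q₁
    have hQ₂c : Q₂ ∘L (1 - Q₂ - Q₃) = 0 := by
      rw [ContinuousLinearMap.comp_sub, ContinuousLinearMap.comp_sub, hQ₂.2, hQ₂₃, sub_zero]
      exact sub_self Q₂
    have hQ₃c : Q₃ ∘L (1 - Q₂ - Q₃) = 0 := by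
      rw [ContinuousLinearMap.comp_sub, ContinuousLinearMap.comp_sub, hQ₃.2, hQ₃₂, sub_zero]
      exact sub_self Q₃
    obtain ⟨W, hW⟩ := R.exists_linearIsometryEquiv_intertwining
    refine ⟨W, hW P₁ Q₁ hP₁.1 hQ₁.1 ?_, hW P₂ Q₂ hP₂.1 hQ₂.1 ?_, hW P₃ Q₃ hP₃.1 hQ₃.1 ?_⟩
    · exact R.intertwining_of_image_range hQ₁.2 h₁
        (R.apply_apply_eq_zero_of_image_range h₁' hQ₁c)
    · refine R.intertwining_of_image_range hQ₂.2 h₂ fun x => ?_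
      rw [show x - P₂ x = P₃ x + (1 - P₂ - P₃) x by simp, map_add, map_add,
        R.apply_apply_eq_zero_of_image_range h₃ hQ₂₃,
        R.apply_apply_eq_zero_of_image_range h₂₃ hQ₂c, add_zero]
    · refine R.intertwining_of_image_range hQ₃.2 h₃ fun x => ?_
      rw [show x - P₃ x = P₂ x + (1 - P₂ - P₃) x by simp; abel, map_add, map_add,
        R.apply_apply_eq_zero_of_image_range h₂ hQ₃₂,
        R.apply_apply_eq_zero_of_image_range h₂₃ hQ₃c, add_zero]
  · rintro ⟨W, h₁, h₂, h₃⟩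
    have hW := W.surjective
    refine ⟨W.toContinuousLinearEquiv, hW.image_range_eq_of_intertwining h₁,
      hW.image_range_eq_of_intertwining fun x => ?_, hW.image_range_eq_of_intertwining h₂,
      hW.image_range_eq_of_intertwining h₃, hW.image_range_eq_of_intertwining fun x => ?_⟩
    · simp [h₁]
    · simp [h₂, h₃]
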